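/- For β ∈ (0,1) and u > 0, the Mittag-Leffler function satisfies the integral identity β E_β(−u) = ∫₀^∞ e^{−uy} y^{−1−1/β} w_β(y^{−1/β}) dy, where w_β is the density of a standard totally positively skewed β-stable random variable. -/

import Mathlib

/-- The (real) Mittag-Leffler function `E_β`. -/
noncomputable def mittagLeffler (β x : ℝ) : ℝ :=
  ∑' j : ℕ, x ^ j / Real.Gamma (j * β + 1)

/-- The density of the standard totally positively skewed `β`-stable law `W_β(1,1)`. -/
noncomputable def stableDensity (β x : ℝ) : ℝ :=
  (1 / Real.pi) *
    (∫ u in Set.Ioi (0:ℝ),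
      Complex.exp (-(Complex.I * u * x) -
        (u : ℂ) ^ (β : ℂ) * Complex.exp (-(Complex.I * Real.pi * β) / 2))).re

/-!
Let `K y s = exp (s - y s ^ β)`. Rotating the half-line integral that defines the stable density to
the imaginary axis and rescaling turns `y ^ (-1 - 1/β) w_β(y ^ (-1/β))` into `1 / (2π y)` times the
integral of `K y` over the imaginary axis, and by Cauchy's theorem over any line `Re s = σ > 0`.

The double integral against `exp (-u y)` does not converge absolutely. Integrating by parts along
the line the `s`-derivative of `(1 / y + β s ^ (β - 1)) K y s` replaces `K y s / y` by
`β ((1 - β) s ^ (β - 2) + β y s ^ (2β - 2)) K y s`, after which Fubini's theorem applies as soon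
as `|u| < cos (πβ/2) σ ^ β`. The integral over `y` is then `exp s` times a function which expands
for `|u| < |s| ^ β` into the geometric-type series `∑ (-u) ^ j (jβ + 1) s ^ (-(jβ + 2))`, and
Hankel's formula `∫ exp s s ^ (-a) = 2π / Γ(a)` integrates this series to `2π E_β(-u)`.
-/

open MeasureTheory Set Filter Topology Complex
open scoped Real ComplexConjugate FourierTransform Interval

section VerticalLines

variable {E : Type*} [NormedAddCommGroup E] [NormedSpace ℂ E]

theorem integral_vertical_eq_of_norm_le {f : ℂ → E} {a b : ℝ} {g : ℝ → ℝ}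
    (hf : ContinuousOn f ([[a, b]] ×ℂ univ))
    (hf' : DifferentiableOn ℂ f (Ioo (min a b) (max a b) ×ℂ univ))
    (ha : Integrable fun v : ℝ ↦ f (a + v * I)) (hb : Integrable fun v : ℝ ↦ f (b + v * I))
    (hfg : ∀ s : ℂ, s.re ∈ [[a, b]] → ‖f s‖ ≤ g |s.im|) (hg : Tendsto g atTop (𝓝 0)) :
    ∫ v : ℝ, f (a + v * I) = ∫ v : ℝ, f (b + v * I) := by
  have horizontal_tendsto (h : ℝ → ℝ) (hh : Tendsto (fun T ↦ |h T|) atTop atTop) :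
      Tendsto (fun T ↦ ∫ x : ℝ in a..b, f (x + h T * I)) atTop (𝓝 0) := by
    refine squeeze_zero_norm (a := fun T ↦ g |h T| * |b - a|) (fun T ↦ ?_)
      (by simpa using (hg.comp hh).mul_const |b - a|)
    refine intervalIntegral.norm_integral_le_of_norm_le_const fun x hx ↦ ?_
    simpa using hfg (x + h T * I) (by simpa using uIoc_subset_uIcc hx)
  have vertical_tendsto {c : ℝ} (hc : Integrable fun v : ℝ ↦ f (c + v * I)) :
      Tendsto (fun T : ℝ ↦ I • ∫ v : ℝ in -T..T, f (c + v * I)) atTop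
        (𝓝 (I • ∫ v : ℝ, f (c + v * I))) := by
    simpa only [id] using
      (intervalIntegral_tendsto_integral hc tendsto_neg_atTop_atBot tendsto_id).const_smul I
  have rectangle_eq_zero (T : ℝ) :
      (∫ x : ℝ in a..b, f (x + (-T : ℝ) * I)) - (∫ x : ℝ in a..b, f (x + T * I)) +
        I • (∫ v : ℝ in -T..T, f (b + v * I)) - I • (∫ v : ℝ in -T..T, f (a + v * I)) = 0 :=
    integral_boundary_rect_eq_zero_of_continuousOn_of_differentiableOn f ⟨a, -T⟩ ⟨b, T⟩
      (hf.mono (reProdIm_subset_iff.2 (prod_mono subset_rfl (subset_univ _))))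
      (hf'.mono (reProdIm_subset_iff.2 (prod_mono subset_rfl (subset_univ _))))
  have limit := (((horizontal_tendsto (-·) (by simpa using tendsto_abs_atTop_atTop)).sub
    (horizontal_tendsto id tendsto_abs_atTop_atTop)).add (vertical_tendsto hb)).sub
    (vertical_tendsto ha)
  have difference_eq_zero :=
    tendsto_nhds_unique (limit.congr rectangle_eq_zero) tendsto_const_nhds
  rw [sub_zero, zero_add, ← smul_sub, smul_eq_zero_iff_right I_ne_zero] at difference_eq_zero
  exact (sub_eq_zero.1 difference_eq_zero).symm

theorem integral_vertical_deriv_eq_zero {f f' : ℂ → E} {σ : ℝ}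
    (hff' : ∀ v : ℝ, HasDerivAt f (f' (σ + v * I)) (σ + v * I))
    (hf : Integrable fun v : ℝ ↦ f (σ + v * I)) (hf' : Integrable fun v : ℝ ↦ f' (σ + v * I)) :
    ∫ v : ℝ, f' (σ + v * I) = 0 := by
  have hasDerivAt_line (v : ℝ) : HasDerivAt (fun v : ℝ ↦ (σ + v * I : ℂ)) I v := by
    simpa using (ofRealCLM.hasDerivAt.mul_const I).const_add (σ : ℂ)
  have := integral_eq_zero_of_hasDerivAt_of_integrable
    (fun v ↦ (hff' v).scomp v (hasDerivAt_line v)) (hf'.smul I) hf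
  rwa [integral_smul, smul_eq_zero_iff_right I_ne_zero] at this

theorem continuous_vertical (σ : ℝ) : Continuous fun v : ℝ ↦ (σ + v * I : ℂ) := by
  fun_prop

theorem abs_re_le_norm_vertical (σ v : ℝ) : |σ| ≤ ‖(σ + v * I : ℂ)‖ := by
  simpa using abs_re_le_norm (σ + v * I)

theorem vertical_mem_slitPlane {σ : ℝ} (hσ : 0 < σ) (v : ℝ) : (σ + v * I : ℂ) ∈ slitPlane :=
  Or.inl (by simpa using hσ)

theorem continuous_vertical_cpow {σ : ℝ} (hσ : 0 < σ) (p : ℂ) :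
    Continuous fun v : ℝ ↦ (σ + v * I : ℂ) ^ p :=
  (continuous_vertical σ).cpow continuous_const (vertical_mem_slitPlane hσ)

theorem integrable_norm_vertical_rpow_neg {σ r : ℝ} (hσ : 0 < σ) (hr : 1 < r) :
    Integrable fun v : ℝ ↦ ‖(σ + v * I : ℂ)‖ ^ (-r) := by
  have norm_pos (v : ℝ) : 0 < ‖(σ + v * I : ℂ)‖ :=
    norm_pos_iff.2 (slitPlane_ne_zero (vertical_mem_slitPlane hσ v))
  refine ((integrable_one_add_norm (E := ℝ) (r := r) (by simpa using hr)).const_mul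
    ((σ / (1 + σ)) ^ (-r))).mono'
    ((continuous_vertical σ).norm.rpow_const fun v ↦ .inl (norm_pos v).ne').aestronglyMeasurable
    (.of_forall fun v ↦ ?_)
  have lower_bound : σ / (1 + σ) * (1 + ‖v‖) ≤ ‖(σ + v * I : ℂ)‖ := by
    have hre : σ ≤ ‖(σ + v * I : ℂ)‖ := (le_abs_self σ).trans (abs_re_le_norm_vertical σ v)
    have him : ‖v‖ ≤ ‖(σ + v * I : ℂ)‖ := by simpa using abs_im_le_norm (σ + v * I)
    rw [div_mul_eq_mul_div, div_le_iff₀ (by positivity)]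
    nlinarith
  rw [Real.norm_of_nonneg (by positivity), ← Real.mul_rpow (by positivity) (by positivity)]
  exact Real.rpow_le_rpow_of_nonpos (by positivity) lower_bound (by linarith)

theorem integrable_vertical_cpow_neg {σ : ℝ} {a : ℂ} (hσ : 0 < σ) (ha : 1 < a.re) :
    Integrable fun v : ℝ ↦ (σ + v * I : ℂ) ^ (-a) := by
  refine ((integrable_norm_vertical_rpow_neg hσ ha).const_mul
    (Real.exp (π * |a.im|))).mono' (continuous_vertical_cpow hσ _).aestronglyMeasurable
    (.of_forall fun v ↦ (norm_cpow_le _ _).trans ?_)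
  rw [neg_re, neg_im, div_eq_mul_inv, ← Real.exp_neg, mul_comm]
  gcongr
  calc -(arg (σ + v * I) * -a.im) ≤ |arg (σ + v * I) * a.im| := by
        rw [mul_neg, neg_neg]; exact le_abs_self _
    _ ≤ π * |a.im| := by rw [abs_mul]; gcongr; exact abs_arg_le_pi _

end VerticalLines

section LaplaceTransform

variable {E : Type*} [NormedAddCommGroup E] [NormedSpace ℂ E]

/-- The one-sided Laplace transform `s ↦ ∫₀^∞ e^{-st} f(t) dt`, with the junk value `0` where the
integral diverges. -/
noncomputable def laplaceTransform (f : ℝ → E) (s : ℂ) : E :=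
  ∫ t : ℝ in Ioi 0, cexp (-s * t) • f t

theorem norm_cexp_neg_mul_ofReal (s : ℂ) (t : ℝ) : ‖cexp (-s * t)‖ = Real.exp (-s.re * t) := by
  simp [norm_exp]

theorem aestronglyMeasurable_of_cexp_smul {f : ℝ → E} {s : ℂ} {μ : Measure ℝ}
    (hf : AEStronglyMeasurable (fun t : ℝ ↦ cexp (-s * t) • f t) μ) :
    AEStronglyMeasurable f μ := by
  refine ((by fun_prop : Continuous fun t : ℝ ↦ cexp (s * t)).aestronglyMeasurable.smul hf).congr
    (.of_forall fun t ↦ ?_)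
  simp [smul_smul, ← Complex.exp_add]

theorem mul_exp_neg_mul_le_inv {δ : ℝ} (hδ : 0 < δ) (t : ℝ) : t * Real.exp (-δ * t) ≤ δ⁻¹ := by
  have : δ * t ≤ Real.exp (δ * t) := by linarith [Real.add_one_le_exp (δ * t)]
  rw [neg_mul, Real.exp_neg, ← div_eq_mul_inv, div_le_iff₀ (Real.exp_pos _), ← div_eq_inv_mul,
    le_div_iff₀ hδ]
  linarith

theorem norm_cexp_neg_mul_smul_le {σ s : ℂ} {δ t : ℝ} (hs : σ.re + δ ≤ s.re) (ht : 0 ≤ t)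
    (x : E) : ‖cexp (-s * t) • x‖ ≤ Real.exp (-δ * t) * ‖cexp (-σ * t) • x‖ := by
  rw [norm_smul, norm_smul, norm_cexp_neg_mul_ofReal, norm_cexp_neg_mul_ofReal, ← mul_assoc,
    ← Real.exp_add]
  gcongr
  nlinarith

theorem integrableOn_cexp_neg_mul_smul_of_re_le {f : ℝ → E} {σ s : ℂ}
    (hf : IntegrableOn (fun t : ℝ ↦ cexp (-σ * t) • f t) (Ioi 0)) (hs : σ.re ≤ s.re) :
    IntegrableOn (fun t : ℝ ↦ cexp (-s * t) • f t) (Ioi 0) := by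
  refine hf.norm.mono' (.smul (Continuous.aestronglyMeasurable (by fun_prop))
    (aestronglyMeasurable_of_cexp_smul hf.1))
    ((ae_restrict_mem measurableSet_Ioi).mono fun t ht ↦ ?_)
  simpa using norm_cexp_neg_mul_smul_le (δ := 0) (by simpa using hs) (le_of_lt ht) (f t)

theorem differentiableAt_laplaceTransform {f : ℝ → E} {σ s : ℂ}
    (hf : IntegrableOn (fun t : ℝ ↦ cexp (-σ * t) • f t) (Ioi 0)) (hs : σ.re < s.re) :
    DifferentiableAt ℂ (laplaceTransform f) s := by
  set δ : ℝ := (s.re - σ.re) / 2 with hδ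
  have δ_pos : 0 < δ := by rw [hδ]; linarith
  have integrand_meas (z : ℂ) : AEStronglyMeasurable (fun t : ℝ ↦ cexp (-z * t) • f t)
      (volume.restrict (Ioi 0)) :=
    (by fun_prop : Continuous fun t : ℝ ↦ cexp (-z * t)).aestronglyMeasurable.smul
      (aestronglyMeasurable_of_cexp_smul hf.1)
  have re_ge {z : ℂ} (hz : z ∈ Metric.ball s δ) : σ.re + δ ≤ z.re := by
    have := (abs_le.1 ((abs_re_le_norm (z - s)).trans (mem_ball_iff_norm.1 hz).le)).1
    rw [sub_re] at this
    linarith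
  refine (hasDerivAt_integral_of_dominated_loc_of_deriv_le
    (F := fun z (t : ℝ) ↦ cexp (-z * t) • f t)
    (F' := fun z (t : ℝ) ↦ -(t : ℂ) • cexp (-z * t) • f t)
    (bound := fun t : ℝ ↦ δ⁻¹ * ‖cexp (-σ * t) • f t‖) (Metric.ball_mem_nhds s δ_pos)
    (.of_forall integrand_meas) (integrableOn_cexp_neg_mul_smul_of_re_le hf hs.le)
    (continuous_ofReal.neg.aestronglyMeasurable.smul (integrand_meas s))
    ((ae_restrict_mem measurableSet_Ioi).mono fun t ht z hz ↦ ?_) (hf.norm.const_mul _)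
    (.of_forall fun t z _ ↦ ?_)).2.differentiableAt
  · have ht0 : 0 ≤ t := le_of_lt ht
    rw [norm_smul, norm_neg, norm_real, Real.norm_of_nonneg ht0]
    calc t * ‖cexp (-z * t) • f t‖
        ≤ t * (Real.exp (-δ * t) * ‖cexp (-σ * t) • f t‖) := by
          gcongr; exact norm_cexp_neg_mul_smul_le (re_ge hz) ht0 (f t)
      _ = t * Real.exp (-δ * t) * ‖cexp (-σ * t) • f t‖ := by ring
      _ ≤ δ⁻¹ * ‖cexp (-σ * t) • f t‖ := by gcongr; exact mul_exp_neg_mul_le_inv δ_pos t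
  · refine (((hasDerivAt_id z).neg.mul_const (t : ℂ)).cexp.smul_const (f t)).congr_deriv ?_
    simp [smul_smul, mul_comm]

theorem eqOn_re_pos_of_eqOn_pos {f g : ℂ → E} [CompleteSpace E]
    (hf : ∀ s : ℂ, 0 < s.re → DifferentiableAt ℂ f s)
    (hg : ∀ s : ℂ, 0 < s.re → DifferentiableAt ℂ g s) (hfg : ∀ r : ℝ, 0 < r → f r = g r) :
    EqOn f g {s : ℂ | 0 < s.re} := by
  have analytic {h : ℂ → E} (hh : ∀ s : ℂ, 0 < s.re → DifferentiableAt ℂ h s) :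
      AnalyticOnNhd ℂ h {s : ℂ | 0 < s.re} :=
    DifferentiableOn.analyticOnNhd (fun s hs ↦ (hh s hs).differentiableWithinAt)
      (isOpen_lt continuous_const continuous_re)
  have tendsto_one : Tendsto (fun r : ℝ ↦ (r : ℂ)) (𝓝[>] 1) (𝓝[≠] 1) := by
    refine tendsto_nhdsWithin_iff.2
      ⟨(continuous_ofReal.tendsto' 1 1 ofReal_one).mono_left nhdsWithin_le_nhds, ?_⟩
    filter_upwards [self_mem_nhdsWithin] with r hr
    exact ofReal_eq_one.not.2 (ne_of_gt hr)
  refine (analytic hf).eqOn_of_preconnected_of_frequently_eq (analytic hg)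
    (convex_halfSpace_re_gt 0).isPreconnected (z₀ := 1) (by simp)
    (tendsto_one.frequently (Eventually.frequently ?_))
  filter_upwards [self_mem_nhdsWithin] with r hr
  exact hfg r (one_pos.trans hr)

theorem fourier_indicator_cexp_smul (f : ℝ → E) (σ : ℂ) (w : ℝ) :
    𝓕 ((Ioi 0).indicator fun t : ℝ ↦ cexp (-σ * t) • f t) w =
      laplaceTransform f (σ + 2 * π * w * I) := by
  rw [Real.fourier_real_eq_integral_exp_smul, laplaceTransform,
    ← integral_indicator measurableSet_Ioi]
  congr 1 with t
  rw [indicator_apply, indicator_apply, smul_ite, smul_zero, smul_smul, ← Complex.exp_add]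
  congr 3
  push_cast
  ring

theorem integral_cexp_smul_laplaceTransform [CompleteSpace E] {f : ℝ → E} {σ x : ℝ} (hx : 0 < x)
    (hf : IntegrableOn (fun t : ℝ ↦ cexp (-σ * t) • f t) (Ioi 0)) (hfx : ContinuousAt f x)
    (hLf : Integrable fun v : ℝ ↦ laplaceTransform f (σ + v * I)) :
    ∫ v : ℝ, cexp ((σ + v * I) * x) • laplaceTransform f (σ + v * I) = (2 * π : ℂ) • f x := by
  set g : ℝ → E := (Ioi 0).indicator fun t ↦ cexp (-σ * t) • f t with hg
  set F : ℝ → E := fun v ↦ laplaceTransform f (σ + v * I) with hF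
  have fourier_eq : 𝓕 g = fun w ↦ F (2 * π * w) := by
    ext w
    simp only [hg, hF, fourier_indicator_cexp_smul]
    push_cast
    rfl
  have g_near_x : g =ᶠ[𝓝 x] fun t ↦ cexp (-σ * t) • f t :=
    eqOn_indicator.eventuallyEq_of_mem (Ioi_mem_nhds hx)
  have g_cont : ContinuousAt g x :=
    ContinuousAt.congr (by fun_prop) g_near_x.symm
  have inversion : 𝓕⁻ (𝓕 g) x = g x :=
    ((integrable_indicator_iff measurableSet_Ioi).2 hf).fourierInv_fourier_eq
      (fourier_eq ▸ hLf.comp_mul_left' (by positivity)) g_cont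
  rw [Real.fourierInv_eq', fourier_eq, g_near_x.eq_of_nhds] at inversion
  have rescaled : ∫ v : ℝ, cexp (v * x * I) • F v = (2 * π : ℝ) • cexp (-σ * x) • f x := by
    have := Measure.integral_comp_mul_left (fun v : ℝ ↦ cexp (v * x * I) • F v) (2 * π)
    rw [abs_of_pos (by positivity), eq_inv_smul_iff₀ (by positivity)] at this
    rw [← this, ← inversion]
    congr! 4 with v
    rw [RCLike.inner_apply', conj_trivial]
    congr 1
    push_cast
    ring
  calc ∫ v : ℝ, cexp ((σ + v * I) * x) • F v
      = cexp (σ * x) • ∫ v : ℝ, cexp (v * x * I) • F v := by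
        rw [← integral_smul]
        congr 1 with v
        rw [smul_smul, ← Complex.exp_add]
        congr 2
        ring
    _ = (2 * π : ℂ) • f x := by
        rw [rescaled, smul_comm, smul_smul, ← Complex.exp_add, neg_mul, add_neg_cancel,
          Complex.exp_zero, one_smul, ← Complex.coe_smul]
        push_cast
        rfl

end LaplaceTransform

section GammaIntegral

variable {a s : ℂ}

theorem integrableOn_cexp_neg_mul_smul_cpow (ha : 0 < a.re) (hs : 0 < s.re) :
    IntegrableOn (fun t : ℝ ↦ cexp (-s * t) • (t : ℂ) ^ (a - 1)) (Ioi 0) := by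
  have dominating : IntegrableOn (fun t : ℝ ↦ t ^ (a.re - 1) * Real.exp (-s.re * t)) (Ioi 0) := by
    simpa using integrableOn_rpow_mul_exp_neg_mul_rpow (p := 1) (s := a.re - 1) (by linarith)
      one_pos hs
  refine dominating.mono' (ContinuousOn.aestronglyMeasurable (fun t ht ↦ ?_) measurableSet_Ioi)
    ((ae_restrict_mem measurableSet_Ioi).mono fun t ht ↦ ?_)
  · have : ContinuousAt (fun t : ℝ ↦ (t : ℂ) ^ (a - 1)) t :=
      continuousAt_ofReal_cpow_const t (a - 1) (.inr (ne_of_gt ht))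
    exact ContinuousAt.continuousWithinAt (by fun_prop)
  · rw [norm_smul, norm_cexp_neg_mul_ofReal, norm_cpow_eq_rpow_re_of_pos ht, mul_comm]
    simp

theorem laplaceTransform_cpow (ha : 0 < a.re) (hs : 0 < s.re) :
    laplaceTransform (fun t : ℝ ↦ (t : ℂ) ^ (a - 1)) s = Gamma a * s ^ (-a) := by
  refine eqOn_re_pos_of_eqOn_pos (f := laplaceTransform fun t : ℝ ↦ (t : ℂ) ^ (a - 1))
    (g := fun s ↦ Gamma a * s ^ (-a)) (fun s hs ↦ ?_) (fun s hs ↦ ?_) (fun r hr ↦ ?_) hs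
  · have σ_re : (s / 2).re = s.re / 2 := by simp
    exact differentiableAt_laplaceTransform (σ := s / 2)
      (integrableOn_cexp_neg_mul_smul_cpow ha (by linarith)) (by linarith)
  · exact (differentiableAt_id.cpow_const (.inl hs)).const_mul _
  · have := integral_cpow_mul_exp_neg_mul_Ioi ha hr
    rw [one_div, inv_cpow _ _ (by simp [arg_ofReal_of_nonneg hr.le, Real.pi_ne_zero.symm]),
      ← cpow_neg, mul_comm] at this
    simpa [laplaceTransform, mul_comm] using this

theorem integrableOn_cexp_neg_mul_smul_pow (n : ℕ) (hs : 0 < s.re) :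
    IntegrableOn (fun t : ℝ ↦ cexp (-s * t) • (t : ℂ) ^ n) (Ioi 0) := by
  simpa using integrableOn_cexp_neg_mul_smul_cpow (a := n + 1) (by norm_cast; positivity) hs

theorem laplaceTransform_pow (n : ℕ) (hs : 0 < s.re) :
    laplaceTransform (fun t : ℝ ↦ (t : ℂ) ^ n) s = n.factorial / s ^ (n + 1) := by
  have := laplaceTransform_cpow (a := n + 1) (by norm_cast; positivity) hs
  simp only [add_sub_cancel_right, cpow_natCast] at this
  rw [this, Gamma_nat_eq_factorial, cpow_neg, ← div_eq_mul_inv]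
  norm_cast

theorem integral_vertical_cexp_mul_cpow_neg {σ : ℝ} (hσ : 0 < σ) (ha : 1 < a.re) :
    ∫ v : ℝ, cexp (σ + v * I) * (σ + v * I : ℂ) ^ (-a) = 2 * π / Gamma a := by
  have transform_eq (v : ℝ) : laplaceTransform (fun t : ℝ ↦ (t : ℂ) ^ (a - 1)) (σ + v * I) =
      Gamma a * (σ + v * I : ℂ) ^ (-a) :=
    laplaceTransform_cpow (by linarith) (by simpa)
  have inversion := integral_cexp_smul_laplaceTransform (σ := σ) one_pos
    (integrableOn_cexp_neg_mul_smul_cpow (a := a) (by linarith) (by simpa))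
    (continuousAt_ofReal_cpow_const 1 (a - 1) (.inr one_ne_zero))
    (by simpa only [transform_eq] using (integrable_vertical_cpow_neg hσ ha).const_mul (Gamma a))
  rw [eq_div_iff (Gamma_ne_zero_of_re_pos (by linarith)), ← integral_mul_const]
  convert! inversion using 1
  · congr 1 with v
    rw [transform_eq, smul_eq_mul]
    push_cast
    ring_nf
  · simp

end GammaIntegral

section MittagLefflerTransform

variable {β σ : ℝ} {s u : ℂ}

/-- The Laplace transform `s ↦ -d/ds (s ^ (β - 1) / (s ^ β + u))` of `t ↦ t E_β(-u t ^ β)`. -/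
noncomputable def mittagLefflerTransform (β : ℝ) (u s : ℂ) : ℂ :=
  ((1 - β) * (s ^ (β : ℂ) / (s ^ (β : ℂ) + u)) + β * (s ^ (β : ℂ) / (s ^ (β : ℂ) + u)) ^ 2) / s ^ 2

theorem hasSum_natCast_mul_add_one_mul_geometric {𝕜 : Type*} [NormedField 𝕜] [CompleteSpace 𝕜]
    {q : 𝕜} (b : 𝕜) (hq : ‖q‖ < 1) :
    HasSum (fun j : ℕ ↦ (j * b + 1) * q ^ j) (b * (q / (1 - q) ^ 2) + (1 - q)⁻¹) :=
  (((hasSum_coe_mul_geometric_of_norm_lt_one hq).mul_left b).add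
    (hasSum_geometric_of_norm_lt_one hq)).congr_fun fun j ↦ by ring

theorem cpow_neg_natCast_mul_add_two (hs : s ≠ 0) (j : ℕ) :
    s ^ (-(j * β + 2) : ℂ) = ((s ^ (β : ℂ)) ^ j * s ^ 2)⁻¹ := by
  rw [cpow_neg, cpow_add _ _ hs, cpow_nat_mul, cpow_ofNat]

theorem hasSum_mittagLefflerTransform (hs : s ≠ 0) (hu : ‖u‖ < ‖s‖ ^ β) :
    HasSum (fun j : ℕ ↦ (-u) ^ j * (j * β + 1) * s ^ (-(j * β + 2) : ℂ))
      (mittagLefflerTransform β u s) := by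
  simp_rw [cpow_neg_natCast_mul_add_two hs, mittagLefflerTransform]
  rw [← norm_cpow_real] at hu
  have power_ne : s ^ (β : ℂ) ≠ 0 := norm_pos_iff.1 ((norm_nonneg u).trans_lt hu)
  generalize s ^ (β : ℂ) = p at *
  have ratio_lt : ‖-u / p‖ < 1 := by
    rwa [norm_div, norm_neg, div_lt_one (norm_pos_iff.2 power_ne)]
  have add_ne : p + u ≠ 0 := fun h ↦ by
    rw [eq_neg_of_add_eq_zero_left h, norm_neg] at hu
    exact hu.false
  have one_sub_ratio : 1 - -u / p = (p + u) / p := by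
    field_simp
    ring
  convert! (hasSum_natCast_mul_add_one_mul_geometric (β : ℂ) ratio_lt).div_const (s ^ 2) using 1
  · ext j
    rw [div_pow]
    field_simp
  · rw [one_sub_ratio]
    field_simp
    ring

theorem norm_mittagLefflerTransform_term_le (hβ : 0 ≤ β) (hσ : 0 < σ) (hs : σ ≤ ‖s‖) (u : ℂ)
    (j : ℕ) : ‖(-u) ^ j * (j * β + 1) * s ^ (-(j * β + 2) : ℂ)‖ ≤
      (j * β + 1) * (‖u‖ / σ ^ β) ^ j * ‖s‖ ^ (-2 : ℝ) := by
  have s_norm_pos : 0 < ‖s‖ := hσ.trans_le hs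
  have coefficient_norm : ‖(j * β + 1 : ℂ)‖ = j * β + 1 := by
    rw [← Real.norm_of_nonneg (by positivity : 0 ≤ j * β + 1), ← norm_real]
    push_cast
    rfl
  rw [norm_mul, norm_mul, norm_pow, norm_neg, coefficient_norm,
    cpow_neg_natCast_mul_add_two (norm_pos_iff.1 s_norm_pos), norm_inv, norm_mul, norm_pow,
    norm_pow, norm_cpow_real, mul_inv, Real.rpow_neg s_norm_pos.le, Real.rpow_two, div_pow,
    mul_comm (‖u‖ ^ j), div_eq_mul_inv, ← mul_assoc, ← mul_assoc]
  gcongr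

theorem integral_mittagLefflerTransform_term (hβ : 0 ≤ β) (hσ : 0 < σ) (u : ℂ) (j : ℕ) :
    ∫ v : ℝ, cexp (σ + v * I) *
      ((-u) ^ j * (j * β + 1) * (σ + v * I : ℂ) ^ (-(j * β + 2) : ℂ)) =
        2 * π * ((-u) ^ j / Gamma (j * β + 1)) := by
  have index_re : 0 < (j * β + 1 : ℂ).re := by simpa using (by positivity : 0 < j * β + 1)
  have index_ne : (j * β + 1 : ℂ) ≠ 0 := fun h ↦ by simp [h] at index_re
  have Gamma_succ : Gamma (j * β + 2) = (j * β + 1) * Gamma (j * β + 1) := by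
    rw [← Gamma_add_one _ index_ne]
    ring_nf
  simp_rw [mul_left_comm (cexp _)]
  rw [integral_const_mul, integral_vertical_cexp_mul_cpow_neg hσ
    (by simpa using (by nlinarith [j.cast_nonneg (α := ℝ)] : (1 : ℝ) < j * β + 2)), Gamma_succ]
  have := Gamma_ne_zero_of_re_pos index_re
  field_simp

theorem hasSum_integral_cexp_mul_mittagLefflerTransform (hβ : 0 < β) (hσ : 0 < σ)
    (hu : ‖u‖ < σ ^ β) :
    HasSum (fun j : ℕ ↦ 2 * π * ((-u) ^ j / Gamma (j * β + 1)))
      (∫ v : ℝ, cexp (σ + v * I) * mittagLefflerTransform β u (σ + v * I)) := by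
  have le_norm (v : ℝ) : σ ≤ ‖(σ + v * I : ℂ)‖ :=
    (le_abs_self σ).trans (abs_re_le_norm_vertical σ v)
  set term : ℕ → ℝ → ℂ := fun j v ↦ cexp (σ + v * I) *
    ((-u) ^ j * (j * β + 1) * (σ + v * I : ℂ) ^ (-(j * β + 2) : ℂ)) with term_def
  have term_sum (v : ℝ) :
      ∑' j, term j v = cexp (σ + v * I) * mittagLefflerTransform β u (σ + v * I) :=
    ((hasSum_mittagLefflerTransform (norm_pos_iff.1 (hσ.trans_le (le_norm v)))
      (hu.trans_le (Real.rpow_le_rpow hσ.le (le_norm v) hβ.le))).mul_left _).tsum_eq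
  have term_le (j : ℕ) (v : ℝ) : ‖term j v‖ ≤
      Real.exp σ * ((j * β + 1) * (‖u‖ / σ ^ β) ^ j) * ‖(σ + v * I : ℂ)‖ ^ (-2 : ℝ) := by
    have re_eq : (σ + v * I : ℂ).re = σ := by simp
    rw [norm_mul, norm_exp, re_eq, mul_assoc (Real.exp σ)]
    gcongr
    exact norm_mittagLefflerTransform_term_le hβ.le hσ (le_norm v) u j
  have bound_int := integrable_norm_vertical_rpow_neg hσ one_lt_two
  have term_int (j : ℕ) : Integrable (term j) := by
    refine (bound_int.const_mul _).mono' (Continuous.aestronglyMeasurable ?_)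
      (.of_forall (term_le j))
    have _ := continuous_vertical_cpow hσ (-(j * β + 2))
    fun_prop
  have term_summable : Summable fun j ↦ ∫ v, ‖term j v‖ := by
    have ratio_lt : ‖‖u‖ / σ ^ β‖ < 1 := by
      rwa [Real.norm_of_nonneg (by positivity), div_lt_one (by positivity)]
    refine .of_nonneg_of_le (fun j ↦ integral_nonneg fun v ↦ norm_nonneg _)
      (fun j ↦ integral_mono (term_int j).norm (bound_int.const_mul _) (term_le j)) ?_
    simp_rw [integral_const_mul]
    exact ((hasSum_natCast_mul_add_one_mul_geometric β ratio_lt).summable.mul_left _).mul_right _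
  have sum_integral := hasSum_integral_of_summable_integral_norm term_int term_summable
  simp_rw [term_sum] at sum_integral
  simpa only [term_def, integral_mittagLefflerTransform_term hβ.le hσ] using sum_integral

theorem two_pi_mul_mittagLeffler_neg {u : ℝ} (hβ : 0 < β) (hσ : 0 < σ) (hu : |u| < σ ^ β) :
    (2 * π * mittagLeffler β (-u) : ℂ) =
      ∫ v : ℝ, cexp (σ + v * I) * mittagLefflerTransform β u (σ + v * I) := by
  rw [← (hasSum_integral_cexp_mul_mittagLefflerTransform hβ hσ (by simpa)).tsum_eq, tsum_mul_left,
    mittagLeffler, ofReal_tsum]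
  push_cast [← Gamma_ofReal]
  rfl

end MittagLefflerTransform

section StableKernel

variable {β x y σ : ℝ} {s : ℂ}

/-- The integrand `exp (x s - y s ^ β)` of the Bromwich integral along a vertical line which, for
`y > 0`, inverts the Laplace transform `s ↦ exp (-y s ^ β)` of a one-sided `β`-stable density; the
power is the principal one. -/
noncomputable def stableKernel (β x y : ℝ) (s : ℂ) : ℂ :=
  cexp (x * s - y * s ^ (β : ℂ))

theorem cos_pi_mul_div_two_pos (hβ : β ∈ Ioo (-1) 1) : 0 < Real.cos (π * β / 2) :=
  Real.cos_pos_of_mem_Ioo ⟨by nlinarith [hβ.1, Real.pi_pos], by nlinarith [hβ.2, Real.pi_pos]⟩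

theorem cos_mul_norm_rpow_le_re_cpow (hβ : β ∈ Icc 0 2) (hs : 0 ≤ s.re) :
    Real.cos (π * β / 2) * ‖s‖ ^ β ≤ (s ^ (β : ℂ)).re := by
  have arg_le : |s.arg * β| ≤ π * β / 2 := by
    rw [abs_mul, abs_of_nonneg hβ.1, mul_div_right_comm]
    exact mul_le_mul_of_nonneg_right (abs_arg_le_pi_div_two_iff.2 hs) hβ.1
  rw [cpow_ofReal_re, mul_comm, ← Real.cos_abs (s.arg * β)]
  gcongr
  exact Real.cos_le_cos_of_nonneg_of_le_pi (abs_nonneg _) (by nlinarith [hβ.2, Real.pi_pos]) arg_le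

theorem norm_stableKernel_le (hβ : β ∈ Icc 0 2) (hy : 0 ≤ y) (hs : 0 ≤ s.re) :
    ‖stableKernel β x y s‖ ≤
      Real.exp (x * s.re) * Real.exp (-(y * Real.cos (π * β / 2) * ‖s‖ ^ β)) := by
  have := mul_le_mul_of_nonneg_left (cos_mul_norm_rpow_le_re_cpow hβ hs) hy
  rw [stableKernel, norm_exp, ← Real.exp_add, Real.exp_le_exp, sub_re, re_ofReal_mul,
    re_ofReal_mul]
  linarith

theorem norm_stableKernel_le_of_im (hβ : β ∈ Ioo 0 1) (hy : 0 ≤ y) (hs : 0 ≤ s.re) :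
    ‖stableKernel β x y s‖ ≤
      Real.exp (x * s.re) * Real.exp (-(y * Real.cos (π * β / 2) * |s.im| ^ β)) := by
  have κ_pos := cos_pi_mul_div_two_pos (Ioo_subset_Ioo_left (by norm_num) hβ)
  have β_nonneg := hβ.1.le
  refine (norm_stableKernel_le ⟨β_nonneg, by linarith [hβ.2]⟩ hy hs).trans ?_
  gcongr
  exact abs_im_le_norm s

theorem continuousAt_stableKernel (hβ : 0 < β) (hs : 0 ≤ s.re) :
    ContinuousAt (stableKernel β x y) s := by
  have : ContinuousAt (fun s : ℂ ↦ s ^ (β : ℂ)) s :=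
    continuousAt_cpow_const_of_re_pos (.inl hs) (by simpa)
  unfold stableKernel
  fun_prop

theorem hasDerivAt_stableKernel (hs : s ∈ slitPlane) :
    HasDerivAt (stableKernel β x y)
      ((x - y * (β * s ^ (β - 1 : ℂ))) * stableKernel β x y s) s := by
  have power : HasDerivAt (fun s : ℂ ↦ s ^ (β : ℂ)) (β * s ^ (β - 1 : ℂ)) s := by
    simpa using (hasDerivAt_id s).cpow_const (c := (β : ℂ)) hs
  have exponent : HasDerivAt (fun s : ℂ ↦ (x * s - y * s ^ (β : ℂ) : ℂ))
      (x - y * (β * s ^ (β - 1 : ℂ))) s :=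
    (hasDerivAt_const_mul (x : ℂ)).fun_sub (power.const_mul (y : ℂ))
  exact exponent.cexp.congr_deriv (mul_comm _ _)

theorem integrable_exp_neg_mul_abs_rpow {b : ℝ} (hβ : 0 < β) (hb : 0 < b) :
    Integrable fun v : ℝ ↦ Real.exp (-(b * |v| ^ β)) := by
  have half_line : IntegrableOn (fun v : ℝ ↦ Real.exp (-(b * v ^ β))) (Ioi 0) := by
    simpa using integrableOn_rpow_mul_exp_neg_mul_rpow (s := 0) (by norm_num) hβ hb
  simpa using (integrable_fun_norm_addHaar (E := ℝ) volume
    (f := fun v ↦ Real.exp (-(b * v ^ β)))).2 (by simpa using half_line)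

theorem tendsto_exp_neg_mul_rpow_atTop {b : ℝ} (hβ : 0 < β) (hb : 0 < b) :
    Tendsto (fun T : ℝ ↦ Real.exp (-(b * T ^ β))) atTop (𝓝 0) :=
  Real.tendsto_exp_neg_atTop_nhds_zero.comp ((tendsto_rpow_atTop hβ).const_mul_atTop hb)

theorem continuous_vertical_stableKernel (hβ : 0 < β) (hσ : 0 ≤ σ) :
    Continuous fun v : ℝ ↦ stableKernel β x y (σ + v * I) :=
  continuous_iff_continuousAt.2 fun v ↦
    (continuousAt_stableKernel hβ (by simpa)).comp (continuous_vertical σ).continuousAt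

theorem integrable_vertical_stableKernel (hβ : β ∈ Ioo 0 1) (hy : 0 < y) (hσ : 0 ≤ σ) :
    Integrable fun v : ℝ ↦ stableKernel β x y (σ + v * I) := by
  have κ_pos := cos_pi_mul_div_two_pos (Ioo_subset_Ioo_left (by norm_num) hβ)
  refine ((integrable_exp_neg_mul_abs_rpow hβ.1 (mul_pos hy κ_pos)).const_mul
    (Real.exp (x * σ))).mono' (continuous_vertical_stableKernel hβ.1 hσ).aestronglyMeasurable
    (.of_forall fun v ↦ ?_)
  simpa using norm_stableKernel_le_of_im (s := σ + v * I) hβ hy.le (by simpa)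

theorem integral_vertical_stableKernel (hβ : β ∈ Ioo 0 1) (hy : 0 < y) (hσ : 0 ≤ σ) :
    ∫ v : ℝ, stableKernel β x y (σ + v * I) = ∫ v : ℝ, stableKernel β x y (v * I) := by
  have κ_pos := cos_pi_mul_div_two_pos (Ioo_subset_Ioo_left (by norm_num) hβ)
  have shift := integral_vertical_eq_of_norm_le (f := stableKernel β x y) (a := 0) (b := σ)
    (g := fun T ↦ Real.exp (|x| * σ) * Real.exp (-(y * Real.cos (π * β / 2) * T ^ β)))
    (fun s hs ↦ ?_) (fun s hs ↦ ?_) (integrable_vertical_stableKernel hβ hy le_rfl)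
    (integrable_vertical_stableKernel hβ hy hσ) (fun s hs ↦ ?_)
    (by simpa using (tendsto_exp_neg_mul_rpow_atTop hβ.1 (mul_pos hy κ_pos)).const_mul _)
  · simpa using shift.symm
  · rw [uIcc_of_le hσ] at hs
    exact (continuousAt_stableKernel hβ.1 hs.1.1).continuousWithinAt
  · rw [min_eq_left hσ] at hs
    exact (hasDerivAt_stableKernel (.inl hs.1.1)).differentiableAt.differentiableWithinAt
  · rw [uIcc_of_le hσ] at hs
    refine (norm_stableKernel_le_of_im hβ hy.le hs.1).trans ?_
    gcongr
    exacts [hs.1, le_abs_self x, hs.2]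

theorem ofReal_mul_cpow {t : ℝ} (ht : 0 < t) (s c : ℂ) :
    (t * s : ℂ) ^ c = (t : ℂ) ^ c * s ^ c := by
  rcases eq_or_ne s 0 with rfl | hs
  · rcases eq_or_ne c 0 with rfl | hc <;> simp [*]
  · have ht' : (t : ℂ) ≠ 0 := ofReal_ne_zero.2 ht.ne'
    rw [cpow_def_of_ne_zero (mul_ne_zero ht' hs), cpow_def_of_ne_zero ht', cpow_def_of_ne_zero hs,
      log_ofReal_mul ht hs, ← Complex.exp_add, ofReal_log ht.le, add_mul]

theorem stableKernel_ofReal_mul {t : ℝ} (ht : 0 < t) (s : ℂ) :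
    stableKernel β x y (t * s) = stableKernel β (t * x) (y * t ^ β) s := by
  rw [stableKernel, stableKernel, ofReal_mul_cpow ht]
  push_cast [ofReal_cpow ht.le]
  ring_nf

theorem stableKernel_conj (hs : s.arg ≠ π) :
    stableKernel β x y (conj s) = conj (stableKernel β x y s) := by
  simp [stableKernel, conj_cpow _ _ hs, ← exp_conj]

theorem integral_eq_two_mul_re_integral_Ioi {f : ℝ → ℂ} (hf : Integrable f)
    (hf_neg : ∀ v, f (-v) = conj (f v)) : ∫ v, f v = (2 * (∫ v in Ioi 0, f v).re : ℝ) := by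
  have negative_half : ∫ v in Iic (0 : ℝ), f v = conj (∫ v in Ioi 0, f v) := by
    rw [← integral_conj, ← neg_zero, ← integral_comp_neg_Ioi, neg_zero]
    simp_rw [hf_neg]
  rw [← intervalIntegral.integral_Iic_add_Ioi (b := 0) hf.integrableOn hf.integrableOn,
    negative_half, add_comm, add_conj]

theorem stableKernel_neg_mul_I {u : ℝ} (hu : 0 < u) :
    stableKernel β x 1 (-(u * I)) =
      cexp (-(I * u * x) - (u : ℂ) ^ (β : ℂ) * cexp (-(I * π * β) / 2)) := by
  have neg_I_cpow : (-I) ^ (β : ℂ) = cexp (-(I * π * β) / 2) := by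
    rw [cpow_def_of_ne_zero (neg_ne_zero.2 I_ne_zero), log_neg_I]
    ring_nf
  rw [stableKernel, ← mul_neg, ofReal_mul_cpow hu, neg_I_cpow]
  push_cast
  ring_nf

theorem stableDensity_eq_integral_stableKernel (hβ : β ∈ Ioo 0 1) (x : ℝ) :
    (stableDensity β x : ℂ) = 1 / (2 * π) * ∫ v : ℝ, stableKernel β x 1 (v * I) := by
  have kernel_neg (v : ℝ) :
      stableKernel β x 1 ((-v : ℝ) * I) = conj (stableKernel β x 1 (v * I)) := by
    rw [← stableKernel_conj (by simp [arg_eq_pi_iff])]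
    simp
  have half_line : ∫ u : ℝ in Ioi 0,
      cexp (-(I * u * x) - (u : ℂ) ^ (β : ℂ) * cexp (-(I * π * β) / 2)) =
        conj (∫ v : ℝ in Ioi 0, stableKernel β x 1 (v * I)) := by
    rw [← integral_conj]
    refine setIntegral_congr_fun measurableSet_Ioi fun u hu ↦ ?_
    rw [← kernel_neg, ← stableKernel_neg_mul_I hu]
    simp
  rw [integral_eq_two_mul_re_integral_Ioi
    (by simpa using integrable_vertical_stableKernel hβ one_pos le_rfl) kernel_neg, stableDensity,
    half_line, conj_re]
  push_cast
  ring

theorem rpow_mul_stableDensity_rpow (hβ : β ∈ Ioo 0 1) (hy : 0 < y) :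
    ((y ^ (-1 - 1 / β) * stableDensity β (y ^ (-1 / β)) : ℝ) : ℂ) =
      1 / (2 * π * y) * ∫ v : ℝ, stableKernel β 1 y (v * I) := by
  set t : ℝ := y ^ (1 / β) with ht
  have t_pos : 0 < t := by positivity
  have t_rpow : t ^ β = y := by
    rw [ht, ← Real.rpow_mul hy.le, one_div_mul_cancel hβ.1.ne', Real.rpow_one]
  have x_eq : y ^ (-1 / β) = t⁻¹ := by rw [neg_div, Real.rpow_neg hy.le]
  have weight_eq : y ^ (-1 - 1 / β) = (y * t)⁻¹ := by
    rw [sub_eq_add_neg, Real.rpow_add hy, Real.rpow_neg_one, Real.rpow_neg hy.le, mul_inv]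
  have rescaled (v : ℝ) :
      stableKernel β 1 y (v * I) = stableKernel β t⁻¹ 1 ((t * v : ℝ) * I) := by
    rw [ofReal_mul, mul_assoc, stableKernel_ofReal_mul t_pos, mul_inv_cancel₀ t_pos.ne', t_rpow,
      one_mul]
  simp_rw [rescaled]
  rw [Measure.integral_comp_mul_left (fun v : ℝ ↦ stableKernel β t⁻¹ 1 (v * I)), x_eq, weight_eq,
    ofReal_mul, stableDensity_eq_integral_stableKernel hβ, abs_of_pos (by positivity), real_smul]
  push_cast
  ring

end StableKernel

section LaplaceOfStableKernel

variable {β y σ : ℝ} {s u : ℂ}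

/-- The summands of `weightedKernel`, for `n = 0` and `n = 1`. The exponents of `y` and `s` are such
that integrating the norm over `y > 0` leaves a multiple of `‖s‖ ^ (-2)` for every `n`. -/
noncomputable def powerKernel (β : ℝ) (n : ℕ) (y : ℝ) (s : ℂ) : ℂ :=
  y ^ n * s ^ (((n + 1) * β - 2 : ℝ) : ℂ) * stableKernel β 1 y s

/-- The integrand which replaces `stableKernel β 1 y` in its Bromwich integral after integration by
parts; unlike the kernel itself, it is absolutely integrable in `y` and `s` jointly. -/
noncomputable def weightedKernel (β y : ℝ) (s : ℂ) : ℂ :=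
  (1 - β) * powerKernel β 0 y s + β * powerKernel β 1 y s

theorem norm_vertical_rpow_le {p : ℝ} (hσ : 0 < σ) (hp : p ≤ 0) (v : ℝ) :
    ‖(σ + v * I : ℂ)‖ ^ p ≤ σ ^ p :=
  Real.rpow_le_rpow_of_nonpos hσ ((le_abs_self σ).trans (abs_re_le_norm_vertical σ v)) hp

theorem integrable_vertical_cpow_mul_stableKernel {p x : ℝ} (hβ : β ∈ Ioo 0 1) (hy : 0 < y)
    (hσ : 0 < σ) (hp : p ≤ 0) :
    Integrable fun v : ℝ ↦ (σ + v * I : ℂ) ^ (p : ℂ) * stableKernel β x y (σ + v * I) :=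
  (integrable_vertical_stableKernel hβ hy hσ.le).bdd_mul (c := σ ^ p)
    (continuous_vertical_cpow hσ p).aestronglyMeasurable
    (.of_forall fun v ↦ (norm_cpow_real _ p).trans_le (norm_vertical_rpow_le hσ hp v))

theorem integrable_vertical_powerKernel {n : ℕ} (hβ : β ∈ Ioo 0 1) (hy : 0 < y) (hσ : 0 < σ)
    (hn : (n + 1) * β ≤ 2) : Integrable fun v : ℝ ↦ powerKernel β n y (σ + v * I) := by
  simpa only [powerKernel, mul_assoc] using
    (integrable_vertical_cpow_mul_stableKernel hβ hy hσ (sub_nonpos.2 hn)).const_mul ((y : ℂ) ^ n)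

theorem integrable_vertical_weightedKernel (hβ : β ∈ Ioo 0 1) (hy : 0 < y) (hσ : 0 < σ) :
    Integrable fun v : ℝ ↦ weightedKernel β y (σ + v * I) :=
  ((integrable_vertical_powerKernel hβ hy hσ (by norm_num; linarith [hβ.2])).const_mul _).add
    ((integrable_vertical_powerKernel hβ hy hσ (by norm_num; linarith [hβ.2])).const_mul _)

theorem cpow_natCast_succ_mul_sub_two (hs : s ≠ 0) (n : ℕ) :
    s ^ (((n + 1) * β - 2 : ℝ) : ℂ) = (s ^ (β : ℂ)) ^ (n + 1) / s ^ 2 := by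
  rw [← cpow_nat_mul, ← cpow_ofNat s 2, ← cpow_sub _ _ hs]
  push_cast
  rfl

theorem hasDerivAt_primitive_stableKernel (hy : y ≠ 0) (hs : s ∈ slitPlane) :
    HasDerivAt (fun s : ℂ ↦ ((y : ℂ)⁻¹ + β * s ^ ((β - 1 : ℝ) : ℂ)) * stableKernel β 1 y s)
      ((y : ℂ)⁻¹ * stableKernel β 1 y s -
        β * weightedKernel β y s) s := by
  have hs0 := slitPlane_ne_zero hs
  have hy' : (y : ℂ) ≠ 0 := ofReal_ne_zero.2 hy
  have power : HasDerivAt (fun s : ℂ ↦ s ^ ((β - 1 : ℝ) : ℂ))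
      ((β - 1) * s ^ ((((0 : ℕ) + 1) * β - 2 : ℝ) : ℂ)) s := by
    convert! (hasDerivAt_id s).cpow_const (c := ((β - 1 : ℝ) : ℂ)) hs using 1
    simp only [id]
    push_cast
    ring_nf
  have first_power : s ^ (β - 1 : ℂ) = s ^ (β : ℂ) / s := by rw [cpow_sub _ _ hs0, cpow_one]
  refine (((power.const_mul (β : ℂ)).const_add (y : ℂ)⁻¹).mul
    (hasDerivAt_stableKernel hs)).congr_deriv ?_
  simp only [weightedKernel, powerKernel, cpow_natCast_succ_mul_sub_two hs0]
  push_cast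
  rw [first_power]
  field_simp
  ring

theorem integral_vertical_stableKernel_eq_weightedKernel (hβ : β ∈ Ioo 0 1) (hy : 0 < y)
    (hσ : 0 < σ) :
    (y : ℂ)⁻¹ * ∫ v : ℝ, stableKernel β 1 y (σ + v * I) =
      β * ∫ v : ℝ, weightedKernel β y (σ + v * I) := by
  have kernel_int : Integrable fun v : ℝ ↦ (y : ℂ)⁻¹ * stableKernel β 1 y (σ + v * I) :=
    (integrable_vertical_stableKernel hβ hy hσ.le).const_mul _
  have weighted_int : Integrable fun v : ℝ ↦ (β : ℂ) * weightedKernel β y (σ + v * I) :=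
    (integrable_vertical_weightedKernel hβ hy hσ).const_mul _
  have primitive_int : Integrable fun v : ℝ ↦
      ((y : ℂ)⁻¹ + β * (σ + v * I : ℂ) ^ ((β - 1 : ℝ) : ℂ)) * stableKernel β 1 y (σ + v * I) := by
    simpa only [add_mul, mul_assoc] using kernel_int.fun_add
      ((integrable_vertical_cpow_mul_stableKernel hβ hy hσ (sub_nonpos.2 hβ.2.le)).const_mul
        (β : ℂ))
  have integral_deriv := integral_vertical_deriv_eq_zero
    (f' := fun s ↦ (y : ℂ)⁻¹ * stableKernel β 1 y s - β * weightedKernel β y s)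
    (fun v ↦ hasDerivAt_primitive_stableKernel hy.ne' (vertical_mem_slitPlane hσ v))
    primitive_int (kernel_int.sub weighted_int)
  rwa [integral_sub kernel_int weighted_int, integral_const_mul, integral_const_mul,
    sub_eq_zero] at integral_deriv

theorem integral_norm_cexp_neg_mul_smul_pow (n : ℕ) (hs : 0 < s.re) :
    ∫ t : ℝ in Ioi 0, ‖cexp (-s * t) • (t : ℂ) ^ n‖ = n.factorial / s.re ^ (n + 1) := by
  have gamma_integral := Real.integral_rpow_mul_exp_neg_mul_Ioi (a := n + 1) (by positivity) hs
  rw [Real.Gamma_nat_eq_factorial, add_sub_cancel_right, one_div, Real.inv_rpow hs.le,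
    inv_mul_eq_div] at gamma_integral
  norm_cast at gamma_integral
  rw [← gamma_integral]
  refine setIntegral_congr_fun measurableSet_Ioi fun t ht ↦ ?_
  simp [norm_exp, abs_of_pos (mem_Ioi.1 ht), mul_comm]

theorem mul_norm_rpow_le_re_cpow_add (hβ : β ∈ Icc 0 2) (hσ : 0 < σ) (hs : σ ≤ s.re) (u : ℂ) :
    (Real.cos (π * β / 2) - ‖u‖ / σ ^ β) * ‖s‖ ^ β ≤ (s ^ (β : ℂ) + u).re := by
  have cpow_le := cos_mul_norm_rpow_le_re_cpow hβ (hσ.le.trans hs)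
  have u_le : ‖u‖ ≤ ‖u‖ / σ ^ β * ‖s‖ ^ β := by
    rw [div_mul_eq_mul_div, le_div_iff₀ (by positivity)]
    have := hs.trans (re_le_norm s)
    have := hβ.1
    gcongr
  rw [add_re, sub_mul]
  linarith [(abs_le.1 (abs_re_le_norm u)).1]

theorem re_cpow_add_pos (hβ : β ∈ Icc 0 2) (hσ : 0 < σ) (hs : σ ≤ s.re)
    (hu : ‖u‖ < Real.cos (π * β / 2) * σ ^ β) : 0 < (s ^ (β : ℂ) + u).re := by
  have s_norm_pos : 0 < ‖s‖ := (hσ.trans_le hs).trans_le (re_le_norm s)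
  refine (mul_pos (sub_pos.2 ?_) (by positivity)).trans_le (mul_norm_rpow_le_re_cpow_add hβ hσ hs u)
  rwa [div_lt_iff₀ (by positivity)]

theorem cexp_neg_mul_smul_powerKernel (n : ℕ) (u s : ℂ) (y : ℝ) :
    cexp (-u * y) • powerKernel β n y s =
      cexp s * s ^ (((n + 1) * β - 2 : ℝ) : ℂ) *
        (cexp (-(s ^ (β : ℂ) + u) * y) • (y : ℂ) ^ n) := by
  have exponent : cexp (-u * y) * stableKernel β 1 y s =
      cexp s * cexp (-(s ^ (β : ℂ) + u) * y) := by
    rw [stableKernel, ← Complex.exp_add, ← Complex.exp_add]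
    push_cast
    ring_nf
  rw [powerKernel, smul_eq_mul, smul_eq_mul]
  linear_combination (y : ℂ) ^ n * s ^ (((n + 1) * β - 2 : ℝ) : ℂ) * exponent

theorem integrableOn_cexp_neg_mul_smul_powerKernel (n : ℕ) (hs : 0 < (s ^ (β : ℂ) + u).re) :
    IntegrableOn (fun y : ℝ ↦ cexp (-u * y) • powerKernel β n y s) (Ioi 0) := by
  simp_rw [cexp_neg_mul_smul_powerKernel]
  exact (integrableOn_cexp_neg_mul_smul_pow n hs).const_mul _

theorem laplaceTransform_powerKernel (n : ℕ) (hs : 0 < (s ^ (β : ℂ) + u).re) :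
    laplaceTransform (fun y ↦ powerKernel β n y s) u =
      cexp s * s ^ (((n + 1) * β - 2 : ℝ) : ℂ) *
        (n.factorial / (s ^ (β : ℂ) + u) ^ (n + 1)) := by
  simp_rw [laplaceTransform, cexp_neg_mul_smul_powerKernel]
  rw [integral_const_mul, ← laplaceTransform_pow n hs, laplaceTransform]

theorem continuous_cexp_neg_mul_smul_powerKernel (n : ℕ) (hσ : 0 < σ) (u : ℂ) :
    Continuous fun p : ℝ × ℝ ↦ cexp (-u * p.1) • powerKernel β n p.1 (σ + p.2 * I) := by
  have cpow_cont (q : ℂ) : Continuous fun p : ℝ × ℝ ↦ (σ + p.2 * I : ℂ) ^ q :=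
    (continuous_vertical_cpow hσ q).comp continuous_snd
  have _ := cpow_cont (β : ℂ)
  have weight_cont := cpow_cont ((n + 1) * β - 2 : ℝ)
  unfold powerKernel stableKernel
  fun_prop

theorem integral_norm_cexp_neg_mul_smul_powerKernel_le (n : ℕ) (hβ : β ∈ Icc 0 2)
    (hσ : 0 < σ) (hs : σ ≤ s.re) (hu : ‖u‖ < Real.cos (π * β / 2) * σ ^ β) :
    ∫ y : ℝ in Ioi 0, ‖cexp (-u * y) • powerKernel β n y s‖ ≤
      Real.exp s.re * (n.factorial / (Real.cos (π * β / 2) - ‖u‖ / σ ^ β) ^ (n + 1)) *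
        ‖s‖ ^ (-2 : ℝ) := by
  set c : ℝ := Real.cos (π * β / 2) - ‖u‖ / σ ^ β
  have c_pos : 0 < c := sub_pos.2 (by rwa [div_lt_iff₀ (by positivity)])
  have s_ne : s ≠ 0 := slitPlane_ne_zero (.inl (hσ.trans_le hs))
  have s_norm_pos : 0 < ‖s‖ := norm_pos_iff.2 s_ne
  have power_norm : ‖s ^ (((n + 1) * β - 2 : ℝ) : ℂ)‖ = (‖s‖ ^ β) ^ (n + 1) / ‖s‖ ^ 2 := by
    rw [cpow_natCast_succ_mul_sub_two s_ne, norm_div, norm_pow, norm_pow, norm_cpow_real]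
  simp_rw [cexp_neg_mul_smul_powerKernel, norm_mul]
  rw [integral_const_mul, integral_norm_cexp_neg_mul_smul_pow n (re_cpow_add_pos hβ hσ hs hu),
    norm_exp, power_norm]
  calc
    _ ≤ Real.exp s.re * ((‖s‖ ^ β) ^ (n + 1) / ‖s‖ ^ 2) *
        (n.factorial / (c * ‖s‖ ^ β) ^ (n + 1)) := by
      gcongr
      exact mul_norm_rpow_le_re_cpow_add hβ hσ hs u
    _ = _ := by
      rw [mul_pow, Real.rpow_neg s_norm_pos.le, Real.rpow_two]
      field_simp

theorem integrable_prod_of_integral_norm_le {X Y E : Type*} [MeasurableSpace X]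
    [MeasurableSpace Y] [NormedAddCommGroup E] {μ : Measure X} {ν : Measure Y} [SFinite μ]
    [SFinite ν] {f : X → Y → E} {g : Y → ℝ} (hf : AEStronglyMeasurable f.uncurry (μ.prod ν))
    (hf_slice : ∀ᵐ y ∂ν, Integrable (f · y) μ) (hg : Integrable g ν)
    (hfg : ∀ᵐ y ∂ν, ∫ x, ‖f x y‖ ∂μ ≤ g y) : Integrable f.uncurry (μ.prod ν) := by
  refine (integrable_prod_iff' hf).2
    ⟨hf_slice, hg.mono' hf.norm.prod_swap.integral_prod_right' (hfg.mono fun y hy ↦ ?_)⟩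
  rwa [Real.norm_of_nonneg (integral_nonneg fun _ ↦ norm_nonneg _)]

theorem integrable_prod_powerKernel (n : ℕ) (hβ : β ∈ Icc 0 2) (hσ : 0 < σ)
    (hu : ‖u‖ < Real.cos (π * β / 2) * σ ^ β) :
    Integrable (fun p : ℝ × ℝ ↦ cexp (-u * p.1) • powerKernel β n p.1 (σ + p.2 * I))
      ((volume.restrict (Ioi 0)).prod volume) := by
  have re_pos (v : ℝ) : 0 < ((σ + v * I : ℂ) ^ (β : ℂ) + u).re :=
    re_cpow_add_pos hβ hσ (by simp) hu
  have slice_le (v : ℝ) := integral_norm_cexp_neg_mul_smul_powerKernel_le (s := σ + v * I) n hβ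
    hσ (by simp) hu
  have σ_add_re (v : ℝ) : (σ + v * I : ℂ).re = σ := by simp
  simp only [σ_add_re] at slice_le
  exact integrable_prod_of_integral_norm_le
    (f := fun y v : ℝ ↦ cexp (-u * y) • powerKernel β n y (σ + v * I))
    (continuous_cexp_neg_mul_smul_powerKernel n hσ u).aestronglyMeasurable
    (.of_forall fun v ↦ integrableOn_cexp_neg_mul_smul_powerKernel n (re_pos v))
    ((integrable_norm_vertical_rpow_neg hσ one_lt_two).const_mul _) (.of_forall slice_le)

theorem integrable_prod_weightedKernel (hβ : β ∈ Icc 0 2) (hσ : 0 < σ)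
    (hu : ‖u‖ < Real.cos (π * β / 2) * σ ^ β) :
    Integrable (fun p : ℝ × ℝ ↦ cexp (-u * p.1) • weightedKernel β p.1 (σ + p.2 * I))
      ((volume.restrict (Ioi 0)).prod volume) := by
  simpa only [weightedKernel, smul_add, mul_smul_comm] using
    ((integrable_prod_powerKernel 0 hβ hσ hu).const_mul (1 - β : ℂ)).fun_add
      ((integrable_prod_powerKernel 1 hβ hσ hu).const_mul (β : ℂ))

theorem laplaceTransform_weightedKernel (hs : s ≠ 0) (hsu : 0 < (s ^ (β : ℂ) + u).re) :
    laplaceTransform (fun y ↦ weightedKernel β y s) u =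
      cexp s * mittagLefflerTransform β u s := by
  have transform (n : ℕ) := laplaceTransform_powerKernel n hsu
  simp_rw [cpow_natCast_succ_mul_sub_two hs, laplaceTransform] at transform
  simp_rw [laplaceTransform, weightedKernel, smul_add, ← mul_smul_comm]
  rw [integral_add ((integrableOn_cexp_neg_mul_smul_powerKernel 0 hsu).const_mul _)
    ((integrableOn_cexp_neg_mul_smul_powerKernel 1 hsu).const_mul _), integral_const_mul,
    integral_const_mul, transform, transform, mittagLefflerTransform, div_pow]
  norm_num
  ring

theorem laplaceTransform_integral_vertical_weightedKernel (hβ : β ∈ Icc 0 2) (hσ : 0 < σ)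
    (hu : ‖u‖ < Real.cos (π * β / 2) * σ ^ β) :
    laplaceTransform (fun y ↦ ∫ v : ℝ, weightedKernel β y (σ + v * I)) u =
      ∫ v : ℝ, cexp (σ + v * I) * mittagLefflerTransform β u (σ + v * I) := by
  simp_rw [laplaceTransform, ← integral_smul]
  rw [integral_integral_swap (integrable_prod_weightedKernel hβ hσ hu)]
  congr 1 with v
  exact laplaceTransform_weightedKernel (slitPlane_ne_zero (vertical_mem_slitPlane hσ v))
    (re_cpow_add_pos hβ hσ (by simp) hu)

theorem rpow_mul_stableDensity_rpow_eq_integral_weightedKernel (hβ : β ∈ Ioo 0 1) (hy : 0 < y)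
    (hσ : 0 < σ) :
    ((y ^ (-1 - 1 / β) * stableDensity β (y ^ (-1 / β)) : ℝ) : ℂ) =
      β / (2 * π) * ∫ v : ℝ, weightedKernel β y (σ + v * I) := by
  have by_parts := integral_vertical_stableKernel_eq_weightedKernel hβ hy hσ
  rw [integral_vertical_stableKernel hβ hy hσ.le] at by_parts
  rw [rpow_mul_stableDensity_rpow hβ hy]
  linear_combination 1 / (2 * π) * by_parts

end LaplaceOfStableKernel

theorem mittagLeffler_stable_integral_identity_general (β : ℝ) (hβ : β ∈ Set.Ioo (0 : ℝ) 1)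
    (u : ℝ) :
    β * mittagLeffler β (-u) =
      ∫ y in Set.Ioi (0:ℝ),
        Real.exp (-u * y) * y ^ (-1 - 1 / β) * stableDensity β (y ^ (-1 / β)) := by
  have κ_pos := cos_pi_mul_div_two_pos (Ioo_subset_Ioo_left (by norm_num) hβ)
  obtain ⟨σ, hu_cos, hσ⟩ : ∃ σ : ℝ, |u| < Real.cos (π * β / 2) * σ ^ β ∧ 0 < σ :=
    ((((tendsto_rpow_atTop hβ.1).const_mul_atTop κ_pos).eventually_gt_atTop _).and
      (eventually_gt_atTop 0)).exists
  have hu : |u| < σ ^ β :=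
    hu_cos.trans_le (mul_le_of_le_one_left (by positivity) (Real.cos_le_one _))
  have transform_eq := laplaceTransform_integral_vertical_weightedKernel (u := u)
    ⟨hβ.1.le, by linarith [hβ.2]⟩ hσ (by simpa)
  rw [laplaceTransform, ← two_pi_mul_mittagLeffler_neg hβ.1 hσ hu] at transform_eq
  have integrand_eq (y : ℝ) (hy : 0 < y) : ((Real.exp (-u * y) * y ^ (-1 - 1 / β) *
      stableDensity β (y ^ (-1 / β)) : ℝ) : ℂ) =
        β / (2 * π) * (cexp (-u * y) • ∫ v : ℝ, weightedKernel β y (σ + v * I)) := by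
    rw [mul_assoc, ofReal_mul, rpow_mul_stableDensity_rpow_eq_integral_weightedKernel hβ hy hσ,
      smul_eq_mul, mul_left_comm]
    push_cast
    rfl
  apply ofReal_injective
  rw [← integral_complex_ofReal, setIntegral_congr_fun measurableSet_Ioi integrand_eq,
    integral_const_mul, transform_eq]
  push_cast
  field_simp

theorem mittagLeffler_stable_integral_identity (β : ℝ)
    (hβ : β ∈ Set.Ioo (0 : ℝ) 1) (u : ℝ) (hu : 0 < u) :
    β * mittagLeffler β (-u) =
      ∫ y in Set.Ioi (0:ℝ),
        Real.exp (-u * y) * y ^ (-1 - 1 / β) * stableDensity β (y ^ (-1 / β)) :=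
  mittagLeffler_stable_integral_identity_general β hβ u
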